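/- arXiv:2109.13618 — 3 statements merged into one kernel-verified Lean document; each statement's English description precedes it below -/
import Mathlib

section
/- Let V ⊆ M_n(ℂ) be a linear subspace with basis (ξ_1,…,ξ_m) satisfying Tr(ξ_s* ξ_t) = n·δ_{st}, and let A_V(x) = ∑_s ξ_s x ξ_s* be its adjacency operator. Then A_V is self-adjoint with respect to the Frobenius inner product ⟨x,y⟩ = Tr(x* y) — equivalently ∑_s ξ_s x ξ_s* = ∑_s ξ_s* x ξ_s for all x ∈ M_n(ℂ) — if and only if V is closed under conjugate transpose, V* = V. (That is, the quantum graph on M_n determined by V is undirected exactly when V = V†.) -/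
open Matrix

/- The tensor `∑ₛ ξₛ ⊗ ξₛ*` is determined by the adjacency operator `x ↦ ∑ₛ ξₛ x ξₛ*`, and equally
by the frame operator `y ↦ ∑ₛ Tr(ξₛ* y) ξₛ`, which is `n` times the orthogonal projection onto `V`.
Replacing each `ξₛ` by `ξₛ*` turns `A_V` into its adjoint and the projection onto `V` into the
projection onto `V*`. Hence `A_V` is self-adjoint iff the projections onto `V` and `V*` agree, that
is, iff `V = V*`. -/

section FrameOperator

variable {R M ι κ : Type*} [CommSemiring R] [AddCommMonoid M] [Module R M] [Fintype ι] [Fintype κ]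
  {I : R →+* R} (B : M →ₛₗ[I] M →ₗ[R] R)

/-- The frame operator `y ↦ ∑ₛ B(vₛ, y) vₛ` of a finite family with respect to a sesquilinear
form. For an orthogonal family with `B(vₛ, vₛ) = c` it plays the role of `c` times the orthogonal
projection onto the span, without requiring division by `c`. -/
def frameOperator (v : ι → M) : M →ₗ[R] M :=
  ∑ s, (B (v s)).smulRight (v s)

variable {B} {v : ι → M} {w : κ → M} {c : R}

theorem frameOperator_apply (y : M) : frameOperator B v y = ∑ s, B (v s) y • v s := by
  simp only [frameOperator, LinearMap.sum_apply, LinearMap.smulRight_apply]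

theorem frameOperator_apply_mem_span (y : M) :
    frameOperator B v y ∈ Submodule.span R (Set.range v) := by
  rw [frameOperator_apply]
  exact Submodule.sum_smul_mem _ _ fun s _ ↦ Submodule.subset_span ⟨s, rfl⟩

variable [DecidableEq ι]

theorem frameOperator_apply_of_mem_span (hv : ∀ s t, B (v s) (v t) = if s = t then c else 0)
    {y : M} (hy : y ∈ Submodule.span R (Set.range v)) : frameOperator B v y = c • y := by
  refine LinearMap.eqOn_span (f := frameOperator B v) (g := c • LinearMap.id) ?_ hy
  rintro _ ⟨t, rfl⟩
  simp [frameOperator_apply, hv]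

theorem apply_frameOperator_of_mem_span (hv : ∀ s t, B (v s) (v t) = if s = t then c else 0)
    {z : M} (hz : z ∈ Submodule.span R (Set.range v)) (y : M) :
    B z (frameOperator B v y) = c * B z y := by
  refine LinearMap.eqOn_span (f := B.flip (frameOperator B v y)) (g := c • B.flip y) ?_ hz
  rintro _ ⟨t, rfl⟩
  simp [frameOperator_apply, hv, mul_comm]

theorem range_frameOperator (hc : IsUnit c)
    (hv : ∀ s t, B (v s) (v t) = if s = t then c else 0) :
    LinearMap.range (frameOperator B v) = Submodule.span R (Set.range v) := by
  refine le_antisymm ?_ fun y hy ↦ ?_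
  · rintro _ ⟨y, rfl⟩
    exact frameOperator_apply_mem_span y
  · obtain ⟨u, rfl⟩ := hc
    refine ⟨(↑u⁻¹ : R) • y, ?_⟩
    rw [map_smul, frameOperator_apply_of_mem_span hv hy, smul_smul, Units.inv_mul, one_smul]

theorem frameOperator_eq_iff_span_eq [DecidableEq κ] (hc : IsUnit c)
    (hv : ∀ s t, B (v s) (v t) = if s = t then c else 0)
    (hw : ∀ s t, B (w s) (w t) = if s = t then c else 0) :
    frameOperator B v = frameOperator B w ↔
      Submodule.span R (Set.range v) = Submodule.span R (Set.range w) := by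
  refine ⟨fun h ↦ ?_, fun h ↦ LinearMap.ext fun y ↦ hc.smul_left_cancel.mp ?_⟩
  · rw [← range_frameOperator hc hv, h, range_frameOperator hc hw]
  · have hcoeff (s : ι) : B (v s) (frameOperator B w y) = c * B (v s) y :=
      apply_frameOperator_of_mem_span hw (h ▸ Submodule.subset_span ⟨s, rfl⟩) y
    calc c • frameOperator B v y
        = frameOperator B v (frameOperator B w y) := by
          simp only [frameOperator_apply (v := v), hcoeff, mul_smul, Finset.smul_sum]
      _ = c • frameOperator B w y :=
          frameOperator_apply_of_mem_span hv (h ▸ frameOperator_apply_mem_span y)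

end FrameOperator

section Kronecker

open scoped Kronecker

variable {R l m n o ι κ : Type*} [CommSemiring R] [Fintype n] [Fintype ι] [Fintype κ]

theorem sum_mul_mul_apply [Fintype m] (a : ι → Matrix l m R) (b : ι → Matrix n o R)
    (x : Matrix m n R) (i : l) (k : o) :
    (∑ s, a s * x * b s) i k = ∑ p, ∑ q, (∑ s, a s ⊗ₖ b s) (i, p) (q, k) * x q p := by
  simp only [Matrix.sum_apply, mul_apply, kronecker_apply, Finset.sum_mul]
  rw [Finset.sum_comm]
  refine Finset.sum_congr rfl fun p _ ↦ ?_
  rw [Finset.sum_comm]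
  refine Finset.sum_congr rfl fun q _ ↦ Finset.sum_congr rfl fun s _ ↦ ?_
  exact mul_right_comm _ _ _

theorem sum_trace_mul_smul_apply [Fintype o] (a : ι → Matrix l m R) (b : ι → Matrix n o R)
    (y : Matrix o n R) (i : l) (j : m) :
    (∑ s, (b s * y).trace • a s) i j = ∑ p, ∑ q, (∑ s, a s ⊗ₖ b s) (i, p) (j, q) * y q p := by
  simp only [Matrix.sum_apply, Matrix.smul_apply, trace, diag_apply, mul_apply, kronecker_apply,
    smul_eq_mul, Finset.sum_mul]
  rw [Finset.sum_comm]
  refine Finset.sum_congr rfl fun p _ ↦ ?_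
  rw [Finset.sum_comm]
  refine Finset.sum_congr rfl fun q _ ↦ Finset.sum_congr rfl fun s _ ↦ ?_
  rw [mul_comm, mul_assoc]

variable {a : ι → Matrix l m R} {b : ι → Matrix n o R}
  {a' : κ → Matrix l m R} {b' : κ → Matrix n o R}

theorem forall_sum_mul_mul_eq_iff_sum_kronecker_eq [Fintype m] :
    (∀ x : Matrix m n R, ∑ s, a s * x * b s = ∑ s, a' s * x * b' s) ↔
      ∑ s, a s ⊗ₖ b s = ∑ s, a' s ⊗ₖ b' s := by
  classical
  refine ⟨fun h ↦ ?_, fun h x ↦ ?_⟩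
  · ext ⟨i, p⟩ ⟨q, k⟩
    simpa [sum_mul_mul_apply, single_apply, ite_and] using congr_fun₂ (h (single q p 1)) i k
  · ext i k
    simp only [sum_mul_mul_apply, h]

theorem forall_sum_trace_mul_smul_eq_iff_sum_kronecker_eq [Fintype o] :
    (∀ y : Matrix o n R, ∑ s, (b s * y).trace • a s = ∑ s, (b' s * y).trace • a' s) ↔
      ∑ s, a s ⊗ₖ b s = ∑ s, a' s ⊗ₖ b' s := by
  classical
  refine ⟨fun h ↦ ?_, fun h y ↦ ?_⟩
  · ext ⟨i, p⟩ ⟨j, q⟩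
    simpa [sum_trace_mul_smul_apply, single_apply, ite_and] using congr_fun₂ (h (single q p 1)) i j
  · ext i j
    simp only [sum_trace_mul_smul_apply, h]

end Kronecker

section Frobenius

variable (R m n : Type*) [CommSemiring R] [StarRing R] [Fintype m] [Fintype n]

/-- The Frobenius form `⟨x, y⟩ = Tr(x* y)`, conjugate-linear in the first variable. It is used in
place of an inner product so that the scalars may be any commutative semiring with involution. -/
def frobeniusForm : Matrix m n R →ₗ⋆[R] Matrix m n R →ₗ[R] R :=
  LinearMap.mk₂'ₛₗ _ _ (fun x y ↦ (xᴴ * y).trace)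
    (by simp [Matrix.add_mul]) (by simp [starRingEnd_apply]) (by simp [Matrix.mul_add]) (by simp)

variable {R m n}

theorem frobeniusForm_apply (x y : Matrix m n R) : frobeniusForm R m n x y = (xᴴ * y).trace :=
  rfl

theorem frobeniusForm_conjTranspose (x y : Matrix m n R) :
    frobeniusForm R n m xᴴ yᴴ = frobeniusForm R m n y x := by
  rw [frobeniusForm_apply, frobeniusForm_apply, conjTranspose_conjTranspose, trace_mul_comm]

end Frobenius

theorem image_conjTranspose_span {R m n : Type*} [CommSemiring R] [StarRing R]
    (S : Set (Matrix m n R)) :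
    conjTranspose '' (Submodule.span R S : Set (Matrix m n R)) =
      Submodule.span R (conjTranspose '' S) :=
  congr_arg SetLike.coe (Submodule.map_span (conjTransposeLinearEquiv m n R R).toLinearMap S)

section Undirected

variable {R n ι : Type*} [CommSemiring R] [StarRing R] [Fintype n] [Fintype ι]

theorem forall_sum_mul_mul_conjTranspose_eq_iff_frameOperator_eq (ξ : ι → Matrix n n R) :
    (∀ x, ∑ s, ξ s * x * (ξ s)ᴴ = ∑ s, (ξ s)ᴴ * x * ξ s) ↔
      frameOperator (frobeniusForm R n n) ξ =
        frameOperator (frobeniusForm R n n) fun s ↦ (ξ s)ᴴ := by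
  rw [forall_sum_mul_mul_eq_iff_sum_kronecker_eq,
    ← forall_sum_trace_mul_smul_eq_iff_sum_kronecker_eq, LinearMap.ext_iff]
  simp only [frameOperator_apply, frobeniusForm_apply, conjTranspose_conjTranspose]

theorem stmt6_general [DecidableEq ι] {c : R} (hc : IsUnit c) (ξ : ι → Matrix n n R)
    (hξ : ∀ s t, ((ξ s)ᴴ * ξ t).trace = if s = t then c else 0) :
    (∀ x, ∑ s, ξ s * x * (ξ s)ᴴ = ∑ s, (ξ s)ᴴ * x * ξ s) ↔
      conjTranspose '' (Submodule.span R (Set.range ξ) : Set (Matrix n n R)) =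
        Submodule.span R (Set.range ξ) := by
  have hξ' (s t : ι) : frobeniusForm R n n (ξ s)ᴴ (ξ t)ᴴ = if s = t then c else 0 :=
    (frobeniusForm_conjTranspose _ _).trans <| (hξ t s).trans <| if_congr eq_comm rfl rfl
  rw [forall_sum_mul_mul_conjTranspose_eq_iff_frameOperator_eq,
    frameOperator_eq_iff_span_eq hc hξ hξ', image_conjTranspose_span, ← Set.range_comp,
    SetLike.coe_set_eq, eq_comm, Function.comp_def]

end Undirected

/-- The quantum graph on `M_n` determined by a subspace `V ⊆ M_n(ℂ)` (with orthonormal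
basis `(ξₛ)`, `Tr(ξₛ* ξₜ) = n·δ_{st}`, and adjacency operator `A_V(x) = ∑ₛ ξₛ x ξₛ*`) is
undirected — `A_V` is self-adjoint for the Frobenius inner product, equivalently
`∑ₛ ξₛ x ξₛ* = ∑ₛ ξₛ* x ξₛ` for all `x` — if and only if `V* = V`. -/
theorem stmt6 (n m : ℕ) (V : Submodule ℂ (Matrix (Fin n) (Fin n) ℂ))
    (ξ : Fin m → Matrix (Fin n) (Fin n) ℂ)
    (hmem : ∀ s, ξ s ∈ V) (hind : LinearIndependent ℂ ξ)
    (hspan : Submodule.span ℂ (Set.range ξ) = V)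
    (hon : ∀ s t, ((ξ s)ᴴ * ξ t).trace = if s = t then (n : ℂ) else 0) :
    (∀ x, ∑ s, ξ s * x * (ξ s)ᴴ = ∑ s, (ξ s)ᴴ * x * ξ s) ↔
      (fun x : Matrix (Fin n) (Fin n) ℂ => xᴴ) '' (V : Set (Matrix (Fin n) (Fin n) ℂ))
        = (V : Set (Matrix (Fin n) (Fin n) ℂ)) := by
  subst hspan
  rcases eq_or_ne n 0 with rfl | hn
  · exact iff_of_true (fun _ ↦ Subsingleton.elim _ _)
      (by rw [Subsingleton.elim (fun x ↦ xᴴ) id, Set.image_id])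
  · exact stmt6_general (Nat.cast_ne_zero.mpr hn).isUnit ξ hon
end

section
/- Let V, W ⊆ M_n(ℂ) be linear subspaces with orthonormal bases (ξ_s), (ζ_t) in the sense Tr(ξ_s* ξ_t) = n·δ_{st}, Tr(ζ_s* ζ_t) = n·δ_{st}, and let A_V, A_W be the associated adjacency operators. Then the following are equivalent: (i) there exists a star-algebra automorphism φ of M_n(ℂ) with φ ∘ A_V = A_W ∘ φ (i.e. the quantum graphs (M_n, Ã_V) and (M_n, Ã_W) are isomorphic); (ii) there exists a unitary U ∈ M_n(ℂ) with W = U V U* := { U ξ U* : ξ ∈ V } (and U may be chosen with determinant 1). -/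
open Matrix

/-!
The adjacency operator of a family `ξ` is encoded by its Choi matrix `M * Mᴴ`, where the columns of
`M` are the vectorizations of the `ξ s`. The range of `M * Mᴴ` is the range of `M`, so the adjacency
operator determines the span of `ξ`. If the family is trace orthogonal with constant `c`, then
`Mᴴ * M = c • 1`, so `M * Mᴴ` is `c` times the orthogonal projection onto the span, and conversely
the span determines the adjacency operator. A star-algebra isomorphism preserves the trace and
transports adjacency operators and spans alike, hence it intertwines two adjacency operators iff it
maps one span onto the other. Finally, star-algebra automorphisms of `M_n(ℂ)` are the conjugations
by unitaries, whose determinant can be normalized to `1` by a phase.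
-/

variable {m n p ι κ R K 𝕜 : Type*}

/-- `Matrix.vec` as a linear map, used to carry spans of matrices to spans of vectors. -/
def vecLinearMap [Semiring R] : Matrix m n R →ₗ[R] n × m → R where
  toFun := vec
  map_add' := vec_add
  map_smul' := vec_smul

/-- The matrix whose columns are the vectorizations of the members of a family `ξ` of matrices. It
turns spans into ranges and the trace pairing of matrices into a matrix product. -/
def vecMatrix (ξ : ι → Matrix m n R) : Matrix (n × m) ι R :=
  of fun a s ↦ vec (ξ s) a

/-- The operator `x ↦ ∑ s, ξ s * x * (ξ s)ᴴ` attached to a family `ξ` of matrices: the adjacency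
operator of the quantum graph spanned by `ξ`. Its Choi matrix is
`vecMatrix ξ * (vecMatrix ξ)ᴴ`. -/
def adjacencyOperator [Fintype ι] [Fintype n] [CommSemiring R] [StarRing R]
    (ξ : ι → Matrix m n R) : Matrix n n R →ₗ[R] Matrix m m R where
  toFun x := ∑ s, ξ s * x * (ξ s)ᴴ
  map_add' x y := by simp only [Matrix.mul_add, Matrix.add_mul, Finset.sum_add_distrib]
  map_smul' c x := by
    simp only [Matrix.mul_smul, Matrix.smul_mul, ← Finset.smul_sum, RingHom.id_apply]

section Semiring

variable [CommSemiring R]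

theorem range_mulVecLin_vecMatrix [Fintype ι] (ξ : ι → Matrix m n R) :
    LinearMap.range (vecMatrix ξ).mulVecLin =
      (Submodule.span R (Set.range ξ)).map vecLinearMap := by
  rw [range_mulVecLin, Submodule.map_span, ← Set.range_comp]
  rfl

theorem range_mulVecLin_vecMatrix_eq_iff [Fintype ι] [Fintype κ] {ξ : ι → Matrix m n R}
    {ζ : κ → Matrix m n R} :
    LinearMap.range (vecMatrix ξ).mulVecLin = LinearMap.range (vecMatrix ζ).mulVecLin ↔
      Submodule.span R (Set.range ξ) = Submodule.span R (Set.range ζ) := by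
  rw [range_mulVecLin_vecMatrix, range_mulVecLin_vecMatrix]
  exact (Submodule.map_injective_of_injective vec_bijective.injective).eq_iff

variable [StarRing R]

theorem mul_conjTranspose_mul_of_range_le [Fintype m] [Fintype n] [Fintype p] [DecidableEq n]
    {M : Matrix m n R} {N : Matrix m p R} {c : R} (hM : Mᴴ * M = c • 1)
    (h : LinearMap.range N.mulVecLin ≤ LinearMap.range M.mulVecLin) : M * Mᴴ * N = c • N := by
  refine ext_iff_mulVec.2 fun v ↦ ?_
  obtain ⟨w, hw⟩ : ∃ w, M *ᵥ w = N *ᵥ v := h ⟨v, rfl⟩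
  rw [← mulVec_mulVec, smul_mulVec, ← hw, mulVec_mulVec, Matrix.mul_assoc, hM, Matrix.mul_smul,
    Matrix.mul_one, smul_mulVec]

theorem conjTranspose_mul_self_vecMatrix_eq_smul_one [Fintype m] [Fintype n] [DecidableEq ι] {c : R}
    {ξ : ι → Matrix m n R} (hξ : ∀ s t, ((ξ s)ᴴ * ξ t).trace = if s = t then c else 0) :
    (vecMatrix ξ)ᴴ * vecMatrix ξ = c • 1 := by
  ext s t
  calc ((vecMatrix ξ)ᴴ * vecMatrix ξ) s t = ((ξ s)ᴴ * ξ t).trace :=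
        star_vec_dotProduct_vec (ξ s) (ξ t)
    _ = (c • (1 : Matrix ι ι R)) s t := by
        rw [hξ, Matrix.smul_apply, one_apply, smul_eq_mul, mul_ite, mul_one, mul_zero]

variable [Fintype ι] [Fintype κ] [Fintype n]

theorem vecMatrix_mul_conjTranspose_self_apply [DecidableEq n] (ξ : ι → Matrix m n R) (j l : n)
    (i k : m) :
    (vecMatrix ξ * (vecMatrix ξ)ᴴ) (j, i) (l, k) = adjacencyOperator ξ (single j l 1) i k := by
  simp only [adjacencyOperator, LinearMap.coe_mk, AddHom.coe_mk, Matrix.sum_apply,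
    single_eq_single_vecMulVec_single, mul_vecMulVec, vecMulVec_mul]
  simp [vecMatrix, mul_apply, vecMulVec_apply]

theorem adjacencyOperator_eq_iff {ξ : ι → Matrix m n R} {ζ : κ → Matrix m n R} :
    adjacencyOperator ξ = adjacencyOperator ζ ↔
      vecMatrix ξ * (vecMatrix ξ)ᴴ = vecMatrix ζ * (vecMatrix ζ)ᴴ := by
  classical
  refine ⟨fun h ↦ ?_, fun h ↦ ?_⟩
  · ext ⟨j, i⟩ ⟨l, k⟩
    simp only [vecMatrix_mul_conjTranspose_self_apply, h]
  · refine ext_linearMap _ fun j l ↦ LinearMap.ext_ring (Matrix.ext fun i k ↦ ?_)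
    have hjl := congrFun₂ h (j, i) (l, k)
    rwa [vecMatrix_mul_conjTranspose_self_apply, vecMatrix_mul_conjTranspose_self_apply] at hjl

theorem map_adjacencyOperator [Fintype m] (φ : Matrix n n R ≃⋆ₐ[R] Matrix m m R)
    (ξ : ι → Matrix n n R) (x : Matrix n n R) :
    φ (adjacencyOperator ξ x) = adjacencyOperator (φ ∘ ξ) (φ x) := by
  simp only [adjacencyOperator, LinearMap.coe_mk, AddHom.coe_mk, Function.comp_apply, map_sum,
    map_mul, ← star_eq_conjTranspose, map_star]

end Semiring

section StarOrderedField

variable [Field K] [PartialOrder K] [StarRing K] [StarOrderedRing K]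

theorem range_mulVecLin_mul_conjTranspose_self [Fintype m] [Fintype n] (M : Matrix m n K) :
    LinearMap.range (M * Mᴴ).mulVecLin = LinearMap.range M.mulVecLin := by
  refine Submodule.eq_of_le_of_finrank_eq ?_ (rank_self_mul_conjTranspose M)
  rw [mulVecLin_mul]
  exact LinearMap.range_comp_le_range _ _

-- `M * Mᴴ` and `N * Nᴴ` both act as the scalar `c` on the common range, so their difference, which
-- is Hermitian, squares to zero.
theorem mul_conjTranspose_self_eq_of_range_eq [Fintype m] [Fintype n] [Fintype p] [DecidableEq n]
    [DecidableEq p] {M : Matrix m n K} {N : Matrix m p K} {c : K} (hM : Mᴴ * M = c • 1)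
    (hN : Nᴴ * N = c • 1) (h : LinearMap.range M.mulVecLin = LinearMap.range N.mulVecLin) :
    M * Mᴴ = N * Nᴴ := by
  have hMM : M * Mᴴ * M = c • M := mul_conjTranspose_mul_of_range_le hM le_rfl
  have hMN : M * Mᴴ * N = c • N := mul_conjTranspose_mul_of_range_le hM h.ge
  have hNM : N * Nᴴ * M = c • M := mul_conjTranspose_mul_of_range_le hN h.le
  have hNN : N * Nᴴ * N = c • N := mul_conjTranspose_mul_of_range_le hN le_rfl
  have hD : (M * Mᴴ - N * Nᴴ)ᴴ * (M * Mᴴ - N * Nᴴ) = 0 := by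
    simp only [conjTranspose_sub, conjTranspose_mul, conjTranspose_conjTranspose, Matrix.sub_mul,
      Matrix.mul_sub, ← Matrix.mul_assoc, hMM, hMN, hNM, hNN, sub_self,
      Matrix.zero_mul]
  exact sub_eq_zero.1 (conjTranspose_mul_self_eq_zero.1 hD)

variable [Fintype ι] [Fintype κ] [Fintype n]

theorem span_eq_of_adjacencyOperator_eq [Finite m] {ξ : ι → Matrix m n K} {ζ : κ → Matrix m n K}
    (h : adjacencyOperator ξ = adjacencyOperator ζ) :
    Submodule.span K (Set.range ξ) = Submodule.span K (Set.range ζ) := by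
  have := Fintype.ofFinite m
  rw [← range_mulVecLin_vecMatrix_eq_iff, ← range_mulVecLin_mul_conjTranspose_self (vecMatrix ξ),
    adjacencyOperator_eq_iff.1 h, range_mulVecLin_mul_conjTranspose_self]

variable [Fintype m] [DecidableEq ι] [DecidableEq κ] {c : K}

theorem adjacencyOperator_eq_iff_span_eq {ξ : ι → Matrix m n K} {ζ : κ → Matrix m n K}
    (hξ : ∀ s t, ((ξ s)ᴴ * ξ t).trace = if s = t then c else 0)
    (hζ : ∀ s t, ((ζ s)ᴴ * ζ t).trace = if s = t then c else 0) :
    adjacencyOperator ξ = adjacencyOperator ζ ↔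
      Submodule.span K (Set.range ξ) = Submodule.span K (Set.range ζ) :=
  ⟨span_eq_of_adjacencyOperator_eq, fun h ↦ adjacencyOperator_eq_iff.2 <|
    mul_conjTranspose_self_eq_of_range_eq (conjTranspose_mul_self_vecMatrix_eq_smul_one hξ)
      (conjTranspose_mul_self_vecMatrix_eq_smul_one hζ) (range_mulVecLin_vecMatrix_eq_iff.2 h)⟩

theorem intertwines_adjacencyOperator_iff_map_span_eq {ξ : ι → Matrix n n K}
    {ζ : κ → Matrix m m K}
    (hξ : ∀ s t, ((ξ s)ᴴ * ξ t).trace = if s = t then c else 0)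
    (hζ : ∀ s t, ((ζ s)ᴴ * ζ t).trace = if s = t then c else 0)
    (φ : Matrix n n K ≃⋆ₐ[K] Matrix m m K) :
    (∀ x, φ (adjacencyOperator ξ x) = adjacencyOperator ζ (φ x)) ↔
      (Submodule.span K (Set.range ζ) : Set (Matrix m m K)) =
        φ '' Submodule.span K (Set.range ξ) := by
  classical
  have hφξ : ∀ s t, (((φ ∘ ξ) s)ᴴ * (φ ∘ ξ) t).trace = if s = t then c else 0 := fun s t ↦ by
    rw [← hξ, ← trace_map φ ((ξ s)ᴴ * ξ t), map_mul, ← star_eq_conjTranspose (ξ s), map_star]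
    rfl
  have hspan : (Submodule.span K (Set.range (φ ∘ ξ)) : Set (Matrix m m K)) =
      φ '' Submodule.span K (Set.range ξ) := by
    rw [Set.range_comp]
    exact congrArg SetLike.coe (Submodule.span_image φ.toAlgEquiv.toLinearMap)
  rw [← hspan, SetLike.coe_set_eq, eq_comm, ← adjacencyOperator_eq_iff_span_eq hφξ hζ,
    LinearMap.ext_iff, (EquivLike.surjective φ).forall]
  simp only [map_adjacencyOperator]

end StarOrderedField

section Automorphisms

variable [Fintype n] [DecidableEq n]

theorem conjStarAlgAut_unitaryGroup_surjective [RCLike 𝕜] :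
    Function.Surjective (Unitary.conjStarAlgAut 𝕜 (Matrix n n 𝕜)) := by
  intro φ
  let e : Matrix n n 𝕜 ≃⋆ₐ[𝕜] (EuclideanSpace 𝕜 n →L[𝕜] EuclideanSpace 𝕜 n) := toEuclideanCLM
  let ψ := (e.symm.trans φ).trans e
  obtain ⟨u, hu⟩ := ψ.eq_linearIsometryEquivConjStarAlgEquiv
    (LinearMap.continuous_of_finiteDimensional ψ.toAlgEquiv.toLinearMap)
  let v := Unitary.linearIsometryEquiv.symm u
  have hψ : ∀ y, ψ y = v * y * star (v : EuclideanSpace 𝕜 n →L[𝕜] EuclideanSpace 𝕜 n) :=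
    DFunLike.congr_fun (hu.trans (Unitary.conjStarAlgAut_symm_unitaryLinearIsometryEquiv u).symm)
  refine ⟨⟨e.symm v, Unitary.map_mem e.symm v.2⟩, StarAlgEquiv.ext fun x ↦ ?_⟩
  calc e.symm v * x * star (e.symm v) = e.symm (v * e x * star ↑v) := by
        rw [map_mul, map_mul, map_star, e.symm_apply_apply]
    _ = e.symm (ψ (e x)) := by rw [hψ]
    _ = φ x := by
        simp only [ψ, StarAlgEquiv.trans_apply, StarAlgEquiv.symm_apply_apply]

theorem exists_mem_unitary_smul_mem_specialUnitaryGroup {U : Matrix n n ℂ}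
    (hU : U ∈ unitaryGroup n ℂ) : ∃ z ∈ unitary ℂ, z • U ∈ specialUnitaryGroup n ℂ := by
  cases isEmpty_or_nonempty n
  · exact ⟨1, one_mem _, mem_specialUnitaryGroup_iff.2 ⟨by simpa using hU, det_isEmpty⟩⟩
  have hdet : U.det ∈ unitary ℂ := det_of_mem_unitary hU
  obtain ⟨z, hz⟩ := IsAlgClosed.exists_pow_nat_eq (star U.det) (Fintype.card_pos (α := n))
  have hz_unitary : z ∈ unitary ℂ := by
    have hnorm : ‖z‖ ^ Fintype.card n = 1 := by
      rw [← norm_pow, hz, norm_star, CStarRing.norm_of_mem_unitary hdet]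
    have hz_norm : ‖z‖ = 1 :=
      (pow_eq_one_iff_of_nonneg (norm_nonneg z) Fintype.card_ne_zero).1 hnorm
    have hz_star : star z * z = 1 := by
      rw [Complex.star_def, Complex.conj_mul', hz_norm, Complex.ofReal_one, one_pow]
    exact Unitary.mem_iff.2 ⟨hz_star, mul_comm z (star z) ▸ hz_star⟩
  refine ⟨z, hz_unitary, mem_specialUnitaryGroup_iff.2 ⟨Unitary.smul_mem_of_mem hz_unitary hU, ?_⟩⟩
  rw [det_smul, hz, Unitary.star_mul_self_of_mem hdet]

theorem exists_mem_specialUnitaryGroup_forall_eq_conj (φ : Matrix n n ℂ ≃⋆ₐ[ℂ] Matrix n n ℂ) :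
    ∃ U ∈ specialUnitaryGroup n ℂ, ∀ x, φ x = U * x * Uᴴ := by
  obtain ⟨U, rfl⟩ := conjStarAlgAut_unitaryGroup_surjective φ
  obtain ⟨z, hz, hzU⟩ := exists_mem_unitary_smul_mem_specialUnitaryGroup U.2
  refine ⟨z • U, hzU, fun x ↦ ?_⟩
  rw [conjTranspose_smul, smul_mul, smul_mul, Matrix.mul_smul, smul_smul,
    Unitary.mul_star_self_of_mem hz, one_smul]
  rfl

end Automorphisms

open scoped ComplexOrder in
theorem stmt8_general [Fintype n] [DecidableEq n] [Fintype ι] [DecidableEq ι] [Fintype κ]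
    [DecidableEq κ] {c : ℂ} {ξ : ι → Matrix n n ℂ} {ζ : κ → Matrix n n ℂ}
    (hξ : ∀ s t, ((ξ s)ᴴ * ξ t).trace = if s = t then c else 0)
    (hζ : ∀ s t, ((ζ s)ᴴ * ζ t).trace = if s = t then c else 0) :
    (∃ φ : Matrix n n ℂ ≃ₐ[ℂ] Matrix n n ℂ,
        (∀ x, φ xᴴ = (φ x)ᴴ) ∧
        ∀ x, φ (∑ s, ξ s * x * (ξ s)ᴴ) = ∑ t, ζ t * (φ x) * (ζ t)ᴴ) ↔
      (∃ U ∈ unitaryGroup n ℂ, U.det = 1 ∧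
        (Submodule.span ℂ (Set.range ζ) : Set (Matrix n n ℂ)) =
          (fun x ↦ U * x * Uᴴ) '' (Submodule.span ℂ (Set.range ξ) : Set (Matrix n n ℂ))) := by
  constructor
  · rintro ⟨φ, hstar, hφ⟩
    let ψ : Matrix n n ℂ ≃⋆ₐ[ℂ] Matrix n n ℂ := .ofAlgEquiv φ hstar
    obtain ⟨U, hU, hψU⟩ := exists_mem_specialUnitaryGroup_forall_eq_conj ψ
    obtain ⟨hU_unitary, hU_det⟩ := mem_specialUnitaryGroup_iff.1 hU
    refine ⟨U, hU_unitary, hU_det, ?_⟩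
    rw [← funext hψU]
    exact (intertwines_adjacencyOperator_iff_map_span_eq hξ hζ ψ).1 hφ
  · rintro ⟨U, hU, -, hspan⟩
    let ψ := Unitary.conjStarAlgAut ℂ (Matrix n n ℂ) ⟨U, hU⟩
    exact ⟨ψ.toAlgEquiv, map_star ψ,
      (intertwines_adjacencyOperator_iff_map_span_eq hξ hζ ψ).2 hspan⟩

/-- For subspaces `V, W ⊆ M_n(ℂ)` with orthonormal bases (`Tr(ξₛ* ξₜ) = n·δ_{st}`) and
associated adjacency operators `A_V, A_W`, the quantum graphs `(M_n, Ã_V)` and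
`(M_n, Ã_W)` are isomorphic — i.e. there is a star-algebra automorphism `φ` of `M_n(ℂ)`
with `φ ∘ A_V = A_W ∘ φ` — if and only if `W = U V U*` for some unitary `U` (which may be
chosen with determinant 1). -/
theorem stmt8 (n m k : ℕ) (V W : Submodule ℂ (Matrix (Fin n) (Fin n) ℂ))
    (ξ : Fin m → Matrix (Fin n) (Fin n) ℂ) (ζ : Fin k → Matrix (Fin n) (Fin n) ℂ)
    (hξmem : ∀ s, ξ s ∈ V) (hζmem : ∀ t, ζ t ∈ W)
    (hξind : LinearIndependent ℂ ξ) (hζind : LinearIndependent ℂ ζ)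
    (hξspan : Submodule.span ℂ (Set.range ξ) = V)
    (hζspan : Submodule.span ℂ (Set.range ζ) = W)
    (hξon : ∀ s t, ((ξ s)ᴴ * ξ t).trace = if s = t then (n : ℂ) else 0)
    (hζon : ∀ s t, ((ζ s)ᴴ * ζ t).trace = if s = t then (n : ℂ) else 0) :
    (∃ φ : Matrix (Fin n) (Fin n) ℂ ≃ₐ[ℂ] Matrix (Fin n) (Fin n) ℂ,
        (∀ x, φ xᴴ = (φ x)ᴴ) ∧
        ∀ x, φ (∑ s, ξ s * x * (ξ s)ᴴ) = ∑ t, ζ t * (φ x) * (ζ t)ᴴ) ↔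
      (∃ U ∈ Matrix.unitaryGroup (Fin n) ℂ, U.det = 1 ∧
        (W : Set (Matrix (Fin n) (Fin n) ℂ))
          = (fun x => U * x * Uᴴ) '' (V : Set (Matrix (Fin n) (Fin n) ℂ))) := by
  subst hξspan hζspan
  exact stmt8_general hξon hζon
end

section
/- Let V and W be complex linear subspaces of M_2(ℂ) such that every element of V and of W is traceless, V and W are closed under conjugate transpose (V* = V, W* = W), and dim_ℂ V = dim_ℂ W. Then there exists a special unitary matrix U ∈ SU(2) such that W = U V U* := { U ξ U* : ξ ∈ V }. (Consequently, a simple quantum graph on the quantum space M_2 is determined up to isomorphism solely by its number of quantum edges m ∈ {0,1,2,3}.) -/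
open Matrix

/-!
A unitary can be rescaled by a phase to have determinant one without changing the conjugation it
induces, so it suffices to conjugate `V` to `W` by some unitary. If the dimension is at most one,
each space is zero or spanned by a nonzero traceless Hermitian matrix, and the spectral theorem
conjugates that line to the one through `diag(1, -1)`. The remaining dimensions are dual to these:
the annihilator for the trace form inside the traceless matrices commutes with unitary conjugation,
preserves closure under the adjoint, is an involution, and exchanges dimensions `m` and `3 - m`.
-/

namespace QuantumGraph

section UnitaryConjugacy

variable {R A : Type*} [CommSemiring R] [Semiring A] [StarRing A] [Algebra R A]

/-- Unitary conjugacy of submodules of a star-algebra, `W = u V u*`: for star-closed subspaces of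
traceless matrices this is isomorphism of the corresponding quantum graphs. -/
def IsUnitarilyConj (V W : Submodule R A) : Prop :=
  ∃ u : unitary A, V.map (Unitary.conjStarAlgAut R A u).toAlgEquiv.toLinearMap = W

theorem conjStarAlgAut_mem_map {u : unitary A} {x : A} {V : Submodule R A} :
    Unitary.conjStarAlgAut R A u x ∈
      V.map (Unitary.conjStarAlgAut R A u).toAlgEquiv.toLinearMap ↔ x ∈ V :=
  (EquivLike.injective (Unitary.conjStarAlgAut R A u)).mem_set_image

namespace IsUnitarilyConj

variable {V W X : Submodule R A}

protected theorem refl (V : Submodule R A) : IsUnitarilyConj V V :=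
  ⟨1, by rw [map_one]; exact V.map_id⟩

protected theorem trans : IsUnitarilyConj V W → IsUnitarilyConj W X → IsUnitarilyConj V X := by
  rintro ⟨u, rfl⟩ ⟨v, rfl⟩
  refine ⟨v * u, ?_⟩
  rw [map_mul, ← Submodule.map_comp]
  rfl

protected theorem symm : IsUnitarilyConj V W → IsUnitarilyConj W V := by
  rintro ⟨u, rfl⟩
  refine ⟨u⁻¹, ?_⟩
  rw [map_inv]
  exact (Submodule.map_symm_eq_iff (Unitary.conjStarAlgAut R A u).toAlgEquiv.toLinearEquiv).mpr rfl

end IsUnitarilyConj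

end UnitaryConjugacy

theorem exists_isSelfAdjoint_mem_ne_zero {A : Type*} [AddCommGroup A] [StarAddMonoid A]
    [Module ℂ A] [StarModule ℂ A] {V : Submodule ℂ A} (hstar : ∀ x ∈ V, star x ∈ V)
    (hV : V ≠ ⊥) : ∃ h ∈ V, IsSelfAdjoint h ∧ h ≠ 0 := by
  obtain ⟨x, hx, hx0⟩ := V.ne_bot_iff.mp hV
  by_cases hskew : x + star x = 0
  · have hI : IsSelfAdjoint (Complex.I • x) := by
      rw [IsSelfAdjoint, star_smul, eq_neg_of_add_eq_zero_right hskew]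
      simp
    exact ⟨Complex.I • x, V.smul_mem _ hx, hI, smul_ne_zero Complex.I_ne_zero hx0⟩
  · exact ⟨x + star x, V.add_mem hx (hstar x hx), .add_star_self x, hskew⟩

section TraceForm

variable {R n : Type*} [CommSemiring R] [Fintype n]

variable (R n) in
/-- The trace form `(x, y) ↦ tr (x y)` on square matrices. -/
def matrixTraceForm : LinearMap.BilinForm R (Matrix n n R) :=
  (LinearMap.mul R (Matrix n n R)).compr₂ (traceLinearMap n R R)

theorem matrixTraceForm_apply (x y : Matrix n n R) : matrixTraceForm R n x y = (x * y).trace := rfl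

theorem matrixTraceForm_nondegenerate : (matrixTraceForm R n).Nondegenerate := by
  constructor <;> intro x hx
  · exact ext_iff_trace_mul_right.mpr fun y => by simpa [matrixTraceForm_apply] using hx y
  · exact ext_iff_trace_mul_left.mpr fun y => by simpa [matrixTraceForm_apply] using hx y

variable [DecidableEq n]

/-- The annihilator of `V` for the trace form, inside the space of traceless matrices. Adjoining
`1` to `V` is what imposes tracelessness. -/
def tracelessOrthogonal (V : Submodule R (Matrix n n R)) : Submodule R (Matrix n n R) :=
  (matrixTraceForm R n).orthogonal (V ⊔ Submodule.span R {1})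

variable {V : Submodule R (Matrix n n R)}

theorem mem_tracelessOrthogonal {y : Matrix n n R} :
    y ∈ tracelessOrthogonal V ↔ (∀ x ∈ V, (x * y).trace = 0) ∧ y.trace = 0 := by
  simp only [tracelessOrthogonal, LinearMap.BilinForm.mem_orthogonal_iff, matrixTraceForm_apply]
  constructor
  · intro hy
    refine ⟨fun x hx => hy x (Submodule.mem_sup_left hx), ?_⟩
    simpa using hy 1 (Submodule.mem_sup_right (Submodule.mem_span_singleton_self 1))
  · rintro ⟨hV, htr⟩ z hz
    obtain ⟨x, hx, w, hw, rfl⟩ := Submodule.mem_sup.mp hz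
    obtain ⟨c, rfl⟩ := Submodule.mem_span_singleton.mp hw
    simp [add_mul, hV x hx, htr]

variable [StarRing R]

theorem conjTranspose_mem_tracelessOrthogonal (hstar : ∀ x ∈ V, xᴴ ∈ V) {y : Matrix n n R}
    (hy : y ∈ tracelessOrthogonal V) : yᴴ ∈ tracelessOrthogonal V := by
  obtain ⟨hV, htr⟩ := mem_tracelessOrthogonal.mp hy
  refine mem_tracelessOrthogonal.mpr ⟨fun x hx => ?_, by rw [trace_conjTranspose, htr, star_zero]⟩
  rw [trace_mul_comm, ← conjTranspose_conjTranspose x, ← conjTranspose_mul, trace_conjTranspose,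
    hV _ (hstar x hx), star_zero]

theorem trace_conjStarAlgAut (u : unitary (Matrix n n R)) (x : Matrix n n R) :
    (Unitary.conjStarAlgAut R _ u x).trace = x.trace := by
  rw [Unitary.conjStarAlgAut_apply, trace_mul_comm, ← mul_assoc, Unitary.coe_star_mul_self, one_mul]

theorem IsUnitarilyConj.tracelessOrthogonal {V W : Submodule R (Matrix n n R)}
    (h : IsUnitarilyConj V W) :
    IsUnitarilyConj (tracelessOrthogonal V) (tracelessOrthogonal W) := by
  obtain ⟨u, rfl⟩ := h
  refine ⟨u, Submodule.ext fun y => ?_⟩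
  have hsurj := EquivLike.surjective (Unitary.conjStarAlgAut R (Matrix n n R) u)
  obtain ⟨x, rfl⟩ := hsurj y
  rw [conjStarAlgAut_mem_map, mem_tracelessOrthogonal, mem_tracelessOrthogonal,
    trace_conjStarAlgAut]
  refine and_congr_left' (hsurj.forall.trans ?_).symm
  simp only [conjStarAlgAut_mem_map, ← map_mul, trace_conjStarAlgAut]

end TraceForm

section Finrank

variable {K n : Type*} [Field K] [Fintype n] [DecidableEq n] {V : Submodule K (Matrix n n K)}

theorem finrank_add_finrank_tracelessOrthogonal (hn : (Fintype.card n : K) ≠ 0)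
    (htr : ∀ x ∈ V, x.trace = 0) :
    Module.finrank K V + 1 + Module.finrank K (tracelessOrthogonal V) = Fintype.card n ^ 2 := by
  have one_notMem : (1 : Matrix n n K) ∉ V := fun h => hn (by simpa using htr 1 h)
  have := LinearMap.BilinForm.finrank_add_finrank_orthogonal' (B := matrixTraceForm K n)
    (V ⊔ Submodule.span K {1})
  rw [matrixTraceForm_nondegenerate.ker_eq_bot, inf_bot_eq, finrank_bot, add_zero,
    Submodule.finrank_sup_span_singleton one_notMem, Module.finrank_matrix,
    Module.finrank_self, mul_one, ← sq] at this
  exact this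

theorem tracelessOrthogonal_tracelessOrthogonal (hn : (Fintype.card n : K) ≠ 0)
    (htr : ∀ x ∈ V, x.trace = 0) : tracelessOrthogonal (tracelessOrthogonal V) = V := by
  have hle : V ≤ tracelessOrthogonal (tracelessOrthogonal V) := fun x hx =>
    mem_tracelessOrthogonal.mpr ⟨fun y hy => by
      rw [trace_mul_comm, (mem_tracelessOrthogonal.mp hy).1 x hx], htr x hx⟩
  have hV := finrank_add_finrank_tracelessOrthogonal hn htr
  have hV' := finrank_add_finrank_tracelessOrthogonal (V := tracelessOrthogonal V) hn
    fun y hy => (mem_tracelessOrthogonal.mp hy).2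
  exact (Submodule.eq_of_le_of_finrank_eq hle (by omega)).symm

end Finrank

theorem exists_smul_mem_specialUnitaryGroup {n : Type*} [Fintype n] [DecidableEq n] [Nonempty n]
    (U : unitaryGroup n ℂ) :
    ∃ c : unitary ℂ, (c • U : unitaryGroup n ℂ).1 ∈ specialUnitaryGroup n ℂ := by
  have hdet : ‖U.1.det‖ = 1 := CStarRing.norm_of_mem_unitary (det_of_mem_unitary U.2)
  obtain ⟨c, hc⟩ := IsAlgClosed.exists_pow_nat_eq (U.1.det)⁻¹ (Fintype.card_pos (α := n))
  have hc_norm : ‖c‖ = 1 := by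
    rw [← pow_eq_one_iff_of_nonneg (norm_nonneg c) (Fintype.card_ne_zero (α := n)), ← norm_pow, hc,
      norm_inv, hdet, inv_one]
  have hc_mem : c ∈ unitary ℂ := by
    rw [Unitary.mem_iff_self_mul_star]
    simpa [hc_norm] using Complex.mul_conj' c
  refine ⟨⟨c, hc_mem⟩, mem_specialUnitaryGroup_iff.mpr ⟨Subtype.property _, ?_⟩⟩
  have hdet_ne : U.1.det ≠ 0 := norm_ne_zero_iff.mp (hdet ▸ one_ne_zero)
  change (c • U.1).det = 1
  rw [det_smul, hc, inv_mul_cancel₀ hdet_ne]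

theorem IsUnitarilyConj.exists_specialUnitary {n : Type*} [Fintype n] [DecidableEq n] [Nonempty n]
    {V W : Submodule ℂ (Matrix n n ℂ)} (h : IsUnitarilyConj V W) :
    ∃ U ∈ specialUnitaryGroup n ℂ,
      (W : Set (Matrix n n ℂ)) = (fun x => U * x * Uᴴ) '' (V : Set (Matrix n n ℂ)) := by
  obtain ⟨U, rfl⟩ := h
  obtain ⟨c, hc⟩ := exists_smul_mem_specialUnitaryGroup U
  have hconj := (Unitary.conjStarAlgAut_ext_iff' (S := ℂ) (c • U) U).mpr ⟨c, rfl⟩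
  refine ⟨_, hc, ?_⟩
  rw [← hconj]
  rfl

theorem exists_conjStarAlgAut_eq_smul_diagonal {𝕜 : Type*} [RCLike 𝕜]
    {h : Matrix (Fin 2) (Fin 2) 𝕜} (hh : h.IsHermitian) (htr : h.trace = 0) :
    ∃ (u : unitaryGroup (Fin 2) 𝕜) (c : 𝕜),
      Unitary.conjStarAlgAut 𝕜 _ u h = c • diagonal ![1, -1] := by
  have hdiag := hh.conjStarAlgAut_star_eigenvectorUnitary
  refine ⟨star hh.eigenvectorUnitary, hh.eigenvalues 0, hdiag.trans ?_⟩
  have hsum : (hh.eigenvalues 1 : 𝕜) = -hh.eigenvalues 0 := by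
    rw [hh.trace_eq_sum_eigenvalues, Fin.sum_univ_two] at htr
    exact eq_neg_of_add_eq_zero_right htr
  rw [← diagonal_smul]
  congr 1
  ext i
  fin_cases i <;> simp [hsum]

theorem isUnitarilyConj_span_diagonal {V : Submodule ℂ (Matrix (Fin 2) (Fin 2) ℂ)}
    (htr : ∀ x ∈ V, x.trace = 0) (hstar : ∀ x ∈ V, xᴴ ∈ V) (hdim : Module.finrank ℂ V = 1) :
    IsUnitarilyConj V (Submodule.span ℂ {diagonal ![1, -1]}) := by
  have hV : V ≠ ⊥ := by
    rintro rfl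
    simp at hdim
  obtain ⟨h, hhV, hh, h0⟩ := exists_isSelfAdjoint_mem_ne_zero hstar hV
  have hspan : Submodule.span ℂ {h} = V :=
    Submodule.eq_of_le_of_finrank_eq ((Submodule.span_singleton_le_iff_mem h V).mpr hhV)
      (by rw [finrank_span_singleton h0, hdim])
  obtain ⟨u, c, hu⟩ := exists_conjStarAlgAut_eq_smul_diagonal hh (htr h hhV)
  have hc : c ≠ 0 := by
    rintro rfl
    rw [zero_smul] at hu
    exact h0 ((map_eq_zero_iff _ (Unitary.conjStarAlgAut ℂ _ u).injective).mp hu)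
  refine ⟨u, ?_⟩
  rw [← hspan, Submodule.map_span, Set.image_singleton]
  exact (congrArg (fun x => Submodule.span ℂ {x}) hu).trans
    (Submodule.span_singleton_smul_eq hc.isUnit _)

theorem isUnitarilyConj_of_finrank_le_one {V W : Submodule ℂ (Matrix (Fin 2) (Fin 2) ℂ)}
    (hVtr : ∀ x ∈ V, x.trace = 0) (hWtr : ∀ x ∈ W, x.trace = 0)
    (hVstar : ∀ x ∈ V, xᴴ ∈ V) (hWstar : ∀ x ∈ W, xᴴ ∈ W)
    (hdim : Module.finrank ℂ V = Module.finrank ℂ W) (hle : Module.finrank ℂ V ≤ 1) :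
    IsUnitarilyConj V W := by
  obtain hV | hV := Nat.le_one_iff_eq_zero_or_eq_one.mp hle
  · rw [Submodule.finrank_eq_zero.mp hV, Submodule.finrank_eq_zero.mp (hdim.symm.trans hV)]
    exact .refl ⊥
  · exact (isUnitarilyConj_span_diagonal hVtr hVstar hV).trans
      (isUnitarilyConj_span_diagonal hWtr hWstar (hdim.symm.trans hV)).symm

theorem isUnitarilyConj_of_finrank_eq {V W : Submodule ℂ (Matrix (Fin 2) (Fin 2) ℂ)}
    (hVtr : ∀ x ∈ V, x.trace = 0) (hWtr : ∀ x ∈ W, x.trace = 0)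
    (hVstar : ∀ x ∈ V, xᴴ ∈ V) (hWstar : ∀ x ∈ W, xᴴ ∈ W)
    (hdim : Module.finrank ℂ V = Module.finrank ℂ W) : IsUnitarilyConj V W := by
  obtain hle | hlt := le_or_gt (Module.finrank ℂ V) 1
  · exact isUnitarilyConj_of_finrank_le_one hVtr hWtr hVstar hWstar hdim hle
  have hcard : (Fintype.card (Fin 2) : ℂ) ≠ 0 := by simp
  have hVrank := finrank_add_finrank_tracelessOrthogonal hcard hVtr
  have hWrank := finrank_add_finrank_tracelessOrthogonal hcard hWtr
  rw [Fintype.card_fin] at hVrank hWrank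
  have horth : IsUnitarilyConj (tracelessOrthogonal V) (tracelessOrthogonal W) :=
    isUnitarilyConj_of_finrank_le_one
      (fun y hy => (mem_tracelessOrthogonal.mp hy).2)
      (fun y hy => (mem_tracelessOrthogonal.mp hy).2)
      (fun y hy => conjTranspose_mem_tracelessOrthogonal hVstar hy)
      (fun y hy => conjTranspose_mem_tracelessOrthogonal hWstar hy) (by omega) (by omega)
  have hdouble := horth.tracelessOrthogonal
  rwa [tracelessOrthogonal_tracelessOrthogonal hcard hVtr,
    tracelessOrthogonal_tracelessOrthogonal hcard hWtr] at hdouble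

end QuantumGraph

/-- Any two star-closed subspaces of traceless matrices in `M_2(ℂ)` of the same dimension
are conjugate by a special unitary; hence a simple quantum graph on the quantum space
`M_2` is determined up to isomorphism solely by its number of quantum edges. -/
theorem stmt9 (V W : Submodule ℂ (Matrix (Fin 2) (Fin 2) ℂ))
    (hVtr : ∀ x ∈ V, x.trace = 0) (hWtr : ∀ x ∈ W, x.trace = 0)
    (hVstar : ∀ x ∈ V, xᴴ ∈ V) (hWstar : ∀ x ∈ W, xᴴ ∈ W)
    (hdim : Module.finrank ℂ V = Module.finrank ℂ W) :
    ∃ U : Matrix (Fin 2) (Fin 2) ℂ, U ∈ Matrix.unitaryGroup (Fin 2) ℂ ∧ U.det = 1 ∧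
      (W : Set (Matrix (Fin 2) (Fin 2) ℂ))
        = (fun x => U * x * Uᴴ) '' (V : Set (Matrix (Fin 2) (Fin 2) ℂ)) := by
  obtain ⟨U, hU, hW⟩ := (QuantumGraph.isUnitarilyConj_of_finrank_eq hVtr hWtr hVstar hWstar
    hdim).exists_specialUnitary
  exact ⟨U, (mem_specialUnitaryGroup_iff.mp hU).1, (mem_specialUnitaryGroup_iff.mp hU).2, hW⟩
end
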